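/- arXiv:1304.3412 — 2 statements merged into one kernel-verified Lean document; each statement's English description precedes it below -/
import Mathlib

section
/- Let V be a finite-dimensional subspace of the polynomial ring R = ℂ[x_1,…,x_N] such that the common zero set Z(V) of V in ℂ^N has dimension k < N. Then there exist polynomials f_1, …, f_{N−k} ∈ V which form a regular sequence in R. -/
/-!
Let `M` be a finite module over a Noetherian ring `R`. If a weakly `M`-regular sequence of length
`d` lies in a prime containing an associated prime `P` of `M`, then `d ≤ dim R ⧸ P`. For `R` a
polynomial ring in `N` variables over a field, every maximal ideal contains a regular sequence of
length `N`, and by Rees' theorem dividing by a nonzerodivisor costs at most one of its elements.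
So after `r < N - k` steps every associated prime `P` of the remaining quotient satisfies
`dim R ⧸ P ≥ N - r > k = dim R ⧸ (V)`, whence `V` is not contained in `P`. A vector space over an
infinite field is not a finite union of proper subspaces, so some element of `V` avoids all the
associated primes and extends the sequence.
-/

open CategoryTheory Abelian RingTheory.Sequence Pointwise

universe u v

/-- The set `S` contains a weakly `M`-regular sequence of length `n`. If `M` is a finite module over
a Noetherian ring and `S` is an ideal, this says that the depth of `M` along `S` is at least `n`;
weak regularity makes the depth infinite when `S • M = M`. -/
def HasWeaklyRegularSequence {R : Type*} [CommRing R] (S : Set R) (M : Type*) [AddCommGroup M]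
    [Module R M] (n : ℕ) : Prop :=
  ∃ rs : List R, rs.length = n ∧ (∀ r ∈ rs, r ∈ S) ∧ IsWeaklyRegular M rs

lemma subsingleton_ext_quotSMulTop {R : Type u} [CommRing R] [Small.{v} R] {N : ModuleCat.{v} R}
    {M : Type v} [AddCommGroup M] [Module R M] {x : R} (hx : IsSMulRegular M x) {i : ℕ}
    (h₀ : Subsingleton (Ext N (ModuleCat.of R M) i))
    (h₁ : Subsingleton (Ext N (ModuleCat.of R M) (i + 1))) :
    Subsingleton (Ext N (ModuleCat.of R (QuotSMulTop x M)) i) := by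
  have hi₀ := AddCommGrpCat.isZero_of_iff_subsingleton.mpr h₀
  have hi₁ := AddCommGrpCat.isZero_of_iff_subsingleton.mpr h₁
  exact AddCommGrpCat.subsingleton_of_isZero <| ShortComplex.Exact.isZero_of_both_zeros
    (Ext.covariant_sequence_exact₃' N (hx.smulShortComplex_shortExact (M := .of R M)) i (i + 1) rfl)
    (hi₀.eq_zero_of_src _) (hi₁.eq_zero_of_tgt _)

namespace HasWeaklyRegularSequence

section Basic

variable {R : Type*} [CommRing R] {S : Set R} {M : Type*} [AddCommGroup M] [Module R M] {n : ℕ}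

lemma zero : HasWeaklyRegularSequence S M 0 :=
  ⟨[], rfl, by simp, .nil R M⟩

lemma cons {x : R} (hxS : x ∈ S) (hx : IsSMulRegular M x)
    (h : HasWeaklyRegularSequence S (QuotSMulTop x M) n) :
    HasWeaklyRegularSequence S M (n + 1) := by
  obtain ⟨rs, rfl, hrs, hreg⟩ := h
  exact ⟨x :: rs, rfl, List.forall_mem_cons.mpr ⟨hxS, hrs⟩, hreg.cons hx⟩

lemma exists_fin (h : HasWeaklyRegularSequence S M n) :
    ∃ f : Fin n → R, (∀ i, f i ∈ S) ∧ IsWeaklyRegular M (List.ofFn f) := by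
  obtain ⟨rs, rfl, hrs, hreg⟩ := h
  exact ⟨rs.get, fun i ↦ hrs _ (rs.get_mem i), by rwa [List.ofFn_get]⟩

lemma of_ringEquiv {A B : Type*} [CommRing A] [CommRing B] (e : A ≃+* B) {T : Set B}
    (h : HasWeaklyRegularSequence (e ⁻¹' T) A n) : HasWeaklyRegularSequence T B n := by
  obtain ⟨rs, rfl, hrs, hreg⟩ := h
  refine ⟨rs.map e, List.length_map _, List.forall_mem_map.mpr hrs, ?_⟩
  refine (e.toAddEquiv.isWeaklyRegular_congr ?_).mp hreg
  exact List.forall₂_map_right_iff.mpr <| List.forall₂_same.mpr fun r _ ↦ map_mul e r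

lemma of_smul_eq_self {x : R} (hxS : x ∈ S) (hx : ∀ y : M, x • y = y) :
    HasWeaklyRegularSequence S M n := by
  induction n generalizing M with
  | zero => exact zero
  | succ n ih =>
    have hreg : IsSMulRegular M x := fun y z hyz ↦ by simpa only [hx] using hyz
    refine cons hxS hreg (ih fun y ↦ ?_)
    obtain ⟨y, rfl⟩ := Submodule.Quotient.mk_surjective _ y
    rw [← Submodule.Quotient.mk_smul, hx]

lemma of_smul_top_eq_top [Module.Finite R M] {I : Ideal R} (hI : I • (⊤ : Submodule R M) = ⊤) :
    HasWeaklyRegularSequence (I : Set R) M n := by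
  obtain ⟨x, hxI, hx⟩ :=
    Submodule.exists_mem_and_smul_eq_self_of_fg_of_le_smul I ⊤ Module.Finite.fg_top hI.ge
  exact of_smul_eq_self hxI fun y ↦ hx y trivial

end Basic

section Rees

variable {R : Type u} [CommRing R] [IsNoetherianRing R] [Small.{v} R] {M : Type v}
  [AddCommGroup M] [Module R M] [Module.Finite R M] {I : Ideal R} {n : ℕ}

lemma iff_subsingleton_ext (hI : I • (⊤ : Submodule R M) ≠ ⊤) :
    HasWeaklyRegularSequence (I : Set R) M n ↔
      ∀ i < n, Subsingleton
        (Ext (ModuleCat.of R (Shrink.{v} (R ⧸ I))) (ModuleCat.of R M) i) := by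
  refine Iff.trans ?_
    ((ModuleCat.exists_isRegular_tfae I n (ModuleCat.of R M) hI.lt_top).out 3 1)
  refine exists_congr fun rs ↦ and_congr_right fun _ ↦ and_congr_right fun hrs ↦
    ⟨fun h ↦ ⟨h, fun htop ↦ hI (top_le_iff.mp ?_)⟩, fun h ↦ h.toIsWeaklyRegular⟩
  exact htop.le.trans (Submodule.smul_mono_left (Ideal.span_le.mpr hrs))

lemma quotSMulTop {x : R} (hx : IsSMulRegular M x)
    (h : HasWeaklyRegularSequence (I : Set R) M (n + 1)) :
    HasWeaklyRegularSequence (I : Set R) (QuotSMulTop x M) n := by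
  by_cases hIx : I • (⊤ : Submodule R (QuotSMulTop x M)) = ⊤
  · exact of_smul_top_eq_top hIx
  have hI : I • (⊤ : Submodule R M) ≠ ⊤ := fun hI ↦ hIx <| by
    rw [← Submodule.range_mkQ, ← Submodule.map_top, ← Submodule.map_smul'', hI]
  rw [iff_subsingleton_ext hI] at h
  refine (iff_subsingleton_ext hIx).mpr fun i hi ↦ ?_
  exact subsingleton_ext_quotSMulTop hx (h i (by lia)) (h (i + 1) (by lia))

end Rees

section Polynomial

lemma polynomial {R : Type*} [CommRing R] [IsJacobsonRing R] {m : Ideal (Polynomial R)}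
    [m.IsMaximal] {n : ℕ} (h : HasWeaklyRegularSequence (m.comap Polynomial.C : Set R) R n) :
    HasWeaklyRegularSequence (m : Set (Polynomial R)) (Polynomial R) (n + 1) := by
  obtain ⟨p, hp, hpm⟩ : ∃ p : Polynomial R, p.Monic ∧ p ∈ m := by
    obtain ⟨p, hp, hpX⟩ := Polynomial.quotient_mk_comp_C_isIntegral_of_isJacobsonRing m
      (Ideal.Quotient.mk m Polynomial.X)
    rw [← Polynomial.hom_eval₂, Polynomial.eval₂_C_X, Ideal.Quotient.eq_zero_iff_mem] at hpX
    exact ⟨p, hp, hpX⟩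
  have hreg : IsSMulRegular (Polynomial R) p := fun q q' hqq' ↦ hp.isRegular.left hqq'
  have : Module.Free R (QuotSMulTop p (Polynomial R)) := by
    have := hp.free_quotient
    have hspan : Ideal.span {p} = p • (⊤ : Submodule (Polynomial R) (Polynomial R)) := by
      rw [← Submodule.ideal_span_singleton_smul, smul_eq_mul, Ideal.mul_top]
    exact .of_equiv ((Submodule.quotEquivOfEq _ _ hspan).restrictScalars R)
  obtain ⟨rs, rfl, hrs, hrsreg⟩ := h
  refine cons hpm hreg ⟨rs.map (algebraMap R (Polynomial R)), List.length_map _,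
    List.forall_mem_map.mpr hrs, ?_⟩
  rw [isWeaklyRegular_map_algebraMap_iff]
  exact ((TensorProduct.rid R _).isWeaklyRegular_congr rs).mp hrsreg.isWeaklyRegular_lTensor

lemma mvPolynomial {A σ : Type*} [CommRing A] [IsJacobsonRing A] [Finite σ]
    (m : Ideal (MvPolynomial σ A)) [m.IsMaximal] :
    HasWeaklyRegularSequence (m : Set (MvPolynomial σ A)) (MvPolynomial σ A) (Nat.card σ) := by
  induction σ using Finite.induction_empty_option with
  | of_equiv e ih =>
    rw [← Nat.card_congr e]
    let e' := (MvPolynomial.renameEquiv A e).toRingEquiv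
    have := Ideal.comap_isMaximal_of_equiv e' (p := m)
    exact of_ringEquiv e' (ih (m.comap e'))
  | h_empty => simpa using zero
  | @h_option σ _ ih =>
    rw [Finite.card_option]
    let e := (MvPolynomial.optionEquivLeft A σ).symm.toRingEquiv
    have := Ideal.comap_isMaximal_of_equiv e (p := m)
    have := Polynomial.isMaximal_comap_C_of_isJacobsonRing (m.comap e)
    exact of_ringEquiv e (polynomial (m := m.comap e) (ih _))

end Polynomial

end HasWeaklyRegularSequence

section AssociatedPrimes

variable {R : Type*} [CommRing R] {M : Type*} [AddCommGroup M] [Module R M]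

lemma exists_mem_associatedPrimes_le_of_mem_support [IsNoetherianRing R] [Module.Finite R M]
    {p : PrimeSpectrum R} (hp : p ∈ Module.support R M) :
    ∃ Q ∈ associatedPrimes R M, Q ≤ p.asIdeal := by
  obtain ⟨Q, hQ, hQp⟩ :=
    Ideal.exists_minimalPrimes_le (Module.annihilator_le_of_mem_support hp)
  exact ⟨Q, Module.associatedPrimes.minimalPrimes_annihilator_subset_associatedPrimes R M hQ, hQp⟩

lemma isSMulRegular_quotient_torsionBySet (s : Set R) {x : R} (hx : IsSMulRegular M x) :
    IsSMulRegular (M ⧸ Submodule.torsionBySet R M s) x := by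
  refine (isSMulRegular_on_quot_iff_lsmul_comap_le _ x).mpr fun y hy ↦ ?_
  rw [Submodule.mem_torsionBySet_iff]
  intro a
  refine hx.right_eq_zero_of_smul ?_
  rw [smul_comm]
  exact (Submodule.mem_torsionBySet_iff _ _).mp hy a

lemma quotSMulTop_map_subtype_injective {L : Submodule R M} {x : R}
    (hx : IsSMulRegular (M ⧸ L) x) : Function.Injective (QuotSMulTop.map x L.subtype) := by
  refine (injective_iff_map_eq_zero _).mpr fun z hz ↦ ?_
  obtain ⟨z, rfl⟩ := Submodule.Quotient.mk_surjective _ z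
  obtain ⟨w, -, hw⟩ : ∃ w ∈ (⊤ : Submodule R M), x • w = z :=
    (Submodule.Quotient.mk_eq_zero _).mp hz
  have hwL : w ∈ L := (isSMulRegular_on_quot_iff_lsmul_comap_le L x).mp hx (by simp [hw])
  exact (Submodule.Quotient.mk_eq_zero _).mpr ⟨⟨w, hwL⟩, trivial, Subtype.ext hw⟩

lemma exists_mem_associatedPrimes_quotSMulTop [IsNoetherianRing R] [Module.Finite R M]
    {P q : Ideal R} [q.IsPrime] (hP : P ∈ associatedPrimes R M) (hPq : P ≤ q)
    {x : R} (hx : IsSMulRegular M x) (hxq : x ∈ q) :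
    ∃ Q ∈ associatedPrimes R (QuotSMulTop x M), P ≤ Q ∧ x ∈ Q ∧ Q ≤ q := by
  obtain ⟨-, y, hy⟩ := isAssociatedPrime_iff.mp hP
  have mem_iff (r : R) : r ∈ P ↔ r • y = 0 := by
    rw [hy, Submodule.mem_colon_singleton, Submodule.mem_bot]
  let L : Submodule R M := Submodule.torsionBySet R M P
  have hyL : y ∈ L := (Submodule.mem_torsionBySet_iff _ _).mpr fun a ↦ (mem_iff a).mp a.2
  have hqL : ⟨q, ‹_›⟩ ∈ Module.support R (QuotSMulTop x L) := by
    rw [Module.support_quotSMulTop]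
    refine ⟨Module.mem_support_iff'.mpr ⟨⟨y, hyL⟩, fun r hr h ↦ hr (hPq ?_)⟩, by simpa using hxq⟩
    exact (mem_iff r).mpr (congrArg Subtype.val h)
  obtain ⟨Q, hQ, hQq⟩ := exists_mem_associatedPrimes_le_of_mem_support hqL
  have hann : Module.annihilator R (QuotSMulTop x L) ≤ Q := by
    simpa only [Submodule.annihilator_top] using hQ.annihilator_le
  refine ⟨Q, associatedPrimes.subset_of_injective
    (quotSMulTop_map_subtype_injective (isSMulRegular_quotient_torsionBySet _ hx)) hQ,
    fun a ha ↦ hann (Module.mem_annihilator.mpr fun z ↦ ?_),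
    hann (QuotSMulTop.mem_annihilator L x), hQq⟩
  obtain ⟨z, rfl⟩ := Submodule.Quotient.mk_surjective _ z
  have haz : a • z = 0 := Subtype.ext ((Submodule.mem_torsionBySet_iff _ _).mp z.2 ⟨a, ha⟩)
  rw [← Submodule.Quotient.mk_smul, haz, Submodule.Quotient.mk_zero]

lemma length_le_ringKrullDim_quotient_of_mem_associatedPrimes [IsNoetherianRing R]
    [Module.Finite R M] {P q : Ideal R} [q.IsPrime] (hP : P ∈ associatedPrimes R M) (hPq : P ≤ q)
    {rs : List R} (hrs : ∀ r ∈ rs, r ∈ q) (hreg : IsWeaklyRegular M rs) :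
    (rs.length : WithBot ℕ∞) ≤ ringKrullDim (R ⧸ P) := by
  induction rs generalizing M P with
  | nil =>
    have := hP.isPrime
    exact ringKrullDim_nonneg_of_nontrivial
  | cons x rs ih =>
    have := hP.isPrime
    obtain ⟨hx, hreg⟩ := (isWeaklyRegular_cons_iff M x rs).mp hreg
    rw [List.forall_mem_cons] at hrs
    obtain ⟨Q, hQ, hPQ, hxQ, hQq⟩ := exists_mem_associatedPrimes_quotSMulTop hP hPq hx hrs.1
    have hxP : x ∉ P := fun hxP ↦ by
      have : x ∈ ⋃ p ∈ associatedPrimes R M, (p : Set R) := Set.mem_biUnion hP hxP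
      rw [biUnion_associatedPrimes_eq_compl_regular] at this
      exact this hx
    calc ((x :: rs).length : WithBot ℕ∞) = rs.length + 1 := by simp
      _ ≤ ringKrullDim (R ⧸ Q) + 1 := by gcongr; exact ih hQ hQq hrs.2 hreg
      _ ≤ ringKrullDim (R ⧸ P) := ringKrullDim_succ_le_of_surjective
          (Ideal.Quotient.factor hPQ) (Ideal.Quotient.factor_surjective hPQ)
          (mem_nonZeroDivisors_of_ne_zero (mt Ideal.Quotient.eq_zero_iff_mem.mp hxP))
          (Ideal.Quotient.eq_zero_iff_mem.mpr hxQ)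

end AssociatedPrimes

section Subspace

variable {K : Type*} [Field K] [Infinite K]

lemma exists_mem_isSMulRegular_of_forall_associatedPrimes {R : Type*} [CommRing R]
    [IsNoetherianRing R] [Algebra K R] {M : Type*} [AddCommGroup M] [Module R M]
    [Module.Finite R M] (V : Submodule K R)
    (hV : ∀ P ∈ associatedPrimes R M, ¬ (V : Set R) ⊆ P) : ∃ x ∈ V, IsSMulRegular M x := by
  by_contra! hreg
  have : Finite (associatedPrimes R M) := associatedPrimes.finite R M
  obtain ⟨P, hPtop⟩ := Subspace.exists_eq_top_of_iUnion_eq_univ (k := K) (E := V)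
    (p := fun P : associatedPrimes R M ↦ (P.1.restrictScalars K).comap V.subtype) <| by
      refine Set.eq_univ_of_forall fun v ↦ ?_
      have hv : (v : R) ∈ ⋃ P ∈ associatedPrimes R M, (P : Set R) := by
        rw [biUnion_associatedPrimes_eq_compl_regular]
        exact hreg v v.2
      simpa using hv
  exact hV P P.2 fun v hv ↦ Submodule.comap_subtype_eq_top.mp hPtop hv

theorem hasWeaklyRegularSequence_submodule {R : Type u} [CommRing R]
    [IsNoetherianRing R] [Algebra K R] [Small.{v} R] {M : Type v} [AddCommGroup M] [Module R M]
    [Module.Finite R M] (V : Submodule K R) {k n : ℕ}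
    (hdim : ringKrullDim (R ⧸ Ideal.span (V : Set R)) ≤ k)
    (hM : ∀ m : Ideal R, m.IsMaximal → (V : Set R) ⊆ m →
      HasWeaklyRegularSequence (m : Set R) M (k + n)) :
    HasWeaklyRegularSequence (V : Set R) M n := by
  induction n generalizing M with
  | zero => exact .zero
  | succ n ih =>
    obtain ⟨x, hxV, hx⟩ : ∃ x ∈ V, IsSMulRegular M x := by
      refine exists_mem_isSMulRegular_of_forall_associatedPrimes V fun P hP hVP ↦ ?_
      obtain ⟨m, hm, hPm⟩ := Ideal.exists_le_maximal P hP.isPrime.ne_top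
      obtain ⟨rs, hlen, hrs, hreg⟩ := hM m hm (hVP.trans hPm)
      have hle : ((k + (n + 1) : ℕ) : WithBot ℕ∞) ≤ k :=
        calc ((k + (n + 1) : ℕ) : WithBot ℕ∞) = rs.length := by rw [hlen]
          _ ≤ ringKrullDim (R ⧸ P) :=
            length_le_ringKrullDim_quotient_of_mem_associatedPrimes hP hPm hrs hreg
          _ ≤ ringKrullDim (R ⧸ Ideal.span (V : Set R)) :=
            ringKrullDim_le_of_surjective _
              (Ideal.Quotient.factor_surjective (Ideal.span_le.mpr hVP))
          _ ≤ k := hdim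
      have : k + (n + 1) ≤ k := by exact_mod_cast hle
      lia
    exact .cons hxV hx (ih fun m hm hVm ↦ (hM m hm hVm).quotSMulTop hx)

theorem stmt6_general {σ : Type*} [Finite σ] (k : ℕ) (V : Submodule K (MvPolynomial σ K))
    (hdim : ringKrullDim (MvPolynomial σ K ⧸ Ideal.span (V : Set (MvPolynomial σ K)))
      = (k : WithBot ℕ∞)) :
    ∃ f : Fin (Nat.card σ - k) → MvPolynomial σ K, (∀ i, f i ∈ V) ∧
      IsRegular (MvPolynomial σ K) (List.ofFn f) := by
  have hV : Ideal.span (V : Set (MvPolynomial σ K)) ≠ ⊤ := by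
    intro h
    have := Ideal.Quotient.subsingleton_iff.mpr h
    rw [ringKrullDim_eq_bot_of_subsingleton] at hdim
    exact WithBot.bot_ne_coe hdim
  have hk : k ≤ Nat.card σ := by
    have := ringKrullDim_quotient_le (Ideal.span (V : Set (MvPolynomial σ K)))
    rw [hdim, MvPolynomial.ringKrullDim_of_isNoetherianRing, ringKrullDim_eq_zero_of_field,
      zero_add] at this
    exact_mod_cast this
  obtain ⟨f, hfV, hf⟩ := (hasWeaklyRegularSequence_submodule V (n := Nat.card σ - k) hdim.le
    fun m _ _ ↦ by simpa [hk] using HasWeaklyRegularSequence.mvPolynomial m).exists_fin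
  have hfspan : Ideal.ofList (List.ofFn f) ≤ Ideal.span V := Ideal.span_mono fun g hg ↦ by
    obtain ⟨i, rfl⟩ := (List.mem_ofFn' f g).mp hg
    exact hfV i
  refine ⟨f, hfV, hf, fun htop ↦ hV (top_le_iff.mp ?_)⟩
  rw [smul_eq_mul, Ideal.mul_top] at htop
  exact htop.trans_le hfspan

end Subspace

/-- Let `V` be a finite-dimensional subspace of `R = ℂ[x_1,…,x_N]` whose common zero
set `Z(V) ⊆ ℂ^N` has dimension `k < N` (expressed by saying that the quotient of `R`
by the ideal generated by `V` has Krull dimension `k`).  Then there exist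
`f_1, …, f_{N-k} ∈ V` forming a regular sequence in `R`. -/
theorem stmt6 (N k : ℕ) (hk : k < N)
    (V : Submodule ℂ (MvPolynomial (Fin N) ℂ)) (hV : FiniteDimensional ℂ V)
    (hdim : ringKrullDim
        (MvPolynomial (Fin N) ℂ ⧸ Ideal.span (V : Set (MvPolynomial (Fin N) ℂ)))
      = (k : WithBot ℕ∞)) :
    ∃ f : Fin (N - k) → MvPolynomial (Fin N) ℂ, (∀ i, f i ∈ V) ∧
      RingTheory.Sequence.IsRegular (MvPolynomial (Fin N) ℂ) (List.ofFn f) := by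
  have h := stmt6_general k V hdim
  rwa [Nat.card_fin] at h
end

section
/- The graded (fake) degree of the irreducible S_d-representation π_λ in the coinvariant algebra satisfies: the q-dimension dim_q(π_λ) := Π_{i=1}^d (1 − q^i) / Π_{x∈λ} (1 − q^{h(x)}) is a polynomial in q with nonnegative integer coefficients. -/
/-- The parts of a partition of `d`, listed in weakly decreasing order (0-indexed,
with value `0` beyond the number of parts). -/
def partsOf {d : ℕ} (lam : d.Partition) : ℕ → ℕ :=
  fun j => (lam.parts.sort (· ≥ ·)).getD j 0

/-- length of column `c` of the partition `μ` (number of rows `r < N` with `μ r > c`). -/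
def colLen (μ : ℕ → ℕ) (N c : ℕ) : ℕ := ((Finset.range N).filter fun r => c < μ r).card

/-- hook length of the cell of `μ` in row `r` and column `c` (both 0-indexed). -/
def hookLen (μ : ℕ → ℕ) (N r c : ℕ) : ℕ := (μ r - c) + (colLen μ N c - r) - 1

/-!
Specialize the complete homogeneous symmetric functions at the variables `1, q, q², …`, where
`h_m = 1 / (q; q)_m`. By a Vandermonde evaluation, the Jacobi–Trudi determinant `s_μ` becomes
`q ^ n(μ) / ∏ (1 - q ^ h)` with `n(μ) = ∑ i * μ i`, so it is enough to show that `(q; q)_d * s_μ`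
is a polynomial in `q` with nonnegative coefficients and to cancel `q ^ n(μ)`.

For this, replace `h_m` by `q ^ m * h_m`, its value at `q, q², …`, one row after another. Since
`h_m = q ^ m * h_m + h_{m-1}`, each replacement subtracts the determinant of the same mixed kind for
`μ` with one cell removed, or `0` if that cell is not a corner, whereas replacing all rows
multiplies `s_μ` by `q ^ d`. So `1 - q ^ d` times a mixed determinant is a sum of mixed
determinants for partitions of `d - 1`, with coefficients `1` and `q ^ d`, and one concludes by
induction on `d`.
-/

namespace HookLength

open Finset Polynomial

section JacobiTrudi

variable {R : Type*}

/-- The Jacobi–Trudi matrix `(f (μ i - i + j))`, with 0-indexed rows and columns; its determinant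
is the Schur function of `μ` when `f m` is the complete homogeneous symmetric function `h_m`. -/
def jacobiTrudi (f : ℤ → R) (μ : ℕ → ℤ) (N : ℕ) : Matrix (Fin N) (Fin N) R :=
  .of fun i j => f (μ i - i + j)

/-- The Jacobi–Trudi matrix with `g` in place of `f` in the first `k` rows, as for flagged Schur
functions. It interpolates between the Jacobi–Trudi matrices of `f` and `g`. -/
def flaggedJacobiTrudi (g f : ℤ → R) (μ : ℕ → ℤ) (N k : ℕ) : Matrix (Fin N) (Fin N) R :=
  .of fun i j => if i < k then g (μ i - i + j) else f (μ i - i + j)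

lemma flaggedJacobiTrudi_zero (g f : ℤ → R) (μ : ℕ → ℤ) (N : ℕ) :
    flaggedJacobiTrudi g f μ N 0 = jacobiTrudi f μ N := by
  ext i j
  simp [flaggedJacobiTrudi, jacobiTrudi]

lemma flaggedJacobiTrudi_self (g f : ℤ → R) (μ : ℕ → ℤ) (N : ℕ) :
    flaggedJacobiTrudi g f μ N N = jacobiTrudi g μ N := by
  ext i j
  simp [flaggedJacobiTrudi, jacobiTrudi]

variable [CommRing R] {g f : ℤ → R} {μ : ℕ → ℤ} {N k : ℕ}

lemma det_flaggedJacobiTrudi_sub_succ (hfg : ∀ m, f m = g m + f (m - 1)) (hk : k < N) :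
    (flaggedJacobiTrudi g f μ N k).det - (flaggedJacobiTrudi g f μ N (k + 1)).det =
      (flaggedJacobiTrudi g f (Function.update μ k (μ k - 1)) N k).det := by
  set M := flaggedJacobiTrudi g f μ N k with hM
  let row (h : ℤ → R) (m : ℤ) : Fin N → R := fun j => h (m - k + j)
  have h_rest : ∀ i : Fin N, i ≠ ⟨k, hk⟩ → (i : ℕ) ≠ k := fun i hi h => hi (Fin.ext h)
  have h_split : M = M.updateRow ⟨k, hk⟩ (row g (μ k) + row f (μ k - 1)) := by
    ext i j
    obtain rfl | hi := eq_or_ne i ⟨k, hk⟩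
    · simp only [hM, flaggedJacobiTrudi, row, Matrix.updateRow_self, Matrix.of_apply, lt_irrefl,
        if_false, Pi.add_apply, hfg (μ k - k + j)]
      ring_nf
    · rw [Matrix.updateRow_ne hi]
  have h_succ : flaggedJacobiTrudi g f μ N (k + 1) = M.updateRow ⟨k, hk⟩ (row g (μ k)) := by
    ext i j
    obtain rfl | hi := eq_or_ne i ⟨k, hk⟩
    · simp [flaggedJacobiTrudi, row]
    · simp [hM, flaggedJacobiTrudi, hi, Nat.le_iff_lt_or_eq, h_rest i hi]
  have h_update : flaggedJacobiTrudi g f (Function.update μ k (μ k - 1)) N k =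
      M.updateRow ⟨k, hk⟩ (row f (μ k - 1)) := by
    ext i j
    obtain rfl | hi := eq_or_ne i ⟨k, hk⟩
    · simp [flaggedJacobiTrudi, row]
    · simp [hM, flaggedJacobiTrudi, hi, h_rest i hi]
  rw [h_succ, h_update, sub_eq_iff_eq_add', ← Matrix.det_updateRow_add, ← h_split]

lemma det_flaggedJacobiTrudi_eq_add_sum (hfg : ∀ m, f m = g m + f (m - 1)) (hk : k ≤ N) :
    (flaggedJacobiTrudi g f μ N k).det = (jacobiTrudi g μ N).det +
      ∑ r ∈ Ico k N, (flaggedJacobiTrudi g f (Function.update μ r (μ r - 1)) N r).det := by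
  rw [← sub_eq_iff_eq_add', ← flaggedJacobiTrudi_self g f, ← neg_sub,
    ← Finset.sum_Ico_sub (fun r => (flaggedJacobiTrudi g f μ N r).det) hk, ← sum_neg_distrib]
  refine sum_congr rfl fun r hr => ?_
  rw [neg_sub, det_flaggedJacobiTrudi_sub_succ hfg (mem_Ico.1 hr).2]

lemma det_flaggedJacobiTrudi_update_eq_zero_of_eq (hk : k + 1 < N) (hμ : μ (k + 1) = μ k) :
    (flaggedJacobiTrudi g f (Function.update μ k (μ k - 1)) N k).det = 0 := by
  refine Matrix.det_zero_of_row_eq (i := ⟨k, by omega⟩) (j := ⟨k + 1, hk⟩) (by simp) ?_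
  ext j
  simp only [flaggedJacobiTrudi, Matrix.of_apply, lt_irrefl, if_false, Function.update_self,
    Nat.not_succ_lt_self, Function.update_of_ne k.succ_ne_self, hμ]
  congr 1
  push_cast
  ring

lemma det_flaggedJacobiTrudi_update_eq_zero_of_last (hf : ∀ m < 0, f m = 0) (hμ : μ k = 0) :
    (flaggedJacobiTrudi g f (Function.update μ k (μ k - 1)) (k + 1) k).det = 0 := by
  refine Matrix.det_eq_zero_of_row_eq_zero (Fin.last k) fun j => ?_
  simp only [flaggedJacobiTrudi, Matrix.of_apply, Fin.val_last, lt_irrefl, if_false,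
    Function.update_self, hμ]
  exact hf _ (by have := j.2; omega)

lemma det_flaggedJacobiTrudi_eq_one (hg : ∀ m < 0, g m = 0) (hf : ∀ m < 0, f m = 0)
    (hg0 : g 0 = 1) (hf0 : f 0 = 1) (hμ : ∀ i < N, μ i = 0) :
    (flaggedJacobiTrudi g f μ N k).det = 1 := by
  rw [Matrix.det_of_isUpperTriangular]
  · simp [flaggedJacobiTrudi, hμ, hg0, hf0]
  · intro i j hij
    have hneg : μ i - i + j < 0 := by
      have : j < i := hij
      rw [hμ i i.2]
      omega
    simp [flaggedJacobiTrudi, hg _ hneg, hf _ hneg]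

end JacobiTrudi

section QPochhammer

variable {R : Type*} [CommRing R] {q : R}

/-- The `q`-Pochhammer symbol `(q; q)_n`. -/
def qPochhammer (q : R) (n : ℕ) : R := ∏ i ∈ Icc 1 n, (1 - q ^ i)

lemma qPochhammer_succ (q : R) (n : ℕ) :
    qPochhammer q (n + 1) = qPochhammer q n * (1 - q ^ (n + 1)) :=
  prod_Icc_succ_top (by omega) _

lemma map_qPochhammer {S : Type*} [CommRing S] (φ : R →+* S) (q : R) (n : ℕ) :
    φ (qPochhammer q n) = qPochhammer (φ q) n := by
  simp only [qPochhammer, map_prod, map_sub, map_one, map_pow]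

lemma one_sub_pow_ne_zero (hq : ¬IsOfFinOrder q) {n : ℕ} (hn : 0 < n) : 1 - q ^ n ≠ 0 :=
  fun h => hq (isOfFinOrder_iff_pow_eq_one.2 ⟨n, hn, (sub_eq_zero.1 h).symm⟩)

lemma qPochhammer_ne_zero [IsDomain R] (hq : ¬IsOfFinOrder q) (n : ℕ) : qPochhammer q n ≠ 0 :=
  prod_ne_zero_iff.2 fun _ hi => one_sub_pow_ne_zero hq (mem_Icc.1 hi).1

end QPochhammer

section PrincipalSpecialization

variable {K : Type*} [Field K] {q : K}

lemma zpow_sum₀ {G₀ ι : Type*} [CommGroupWithZero G₀] {q : G₀} (hq : q ≠ 0) (s : Finset ι)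
    (a : ι → ℤ) :
    q ^ (∑ i ∈ s, a i) = ∏ i ∈ s, q ^ a i := by
  induction s using Finset.cons_induction with
  | empty => simp
  | cons i s hi ih => rw [sum_cons, prod_cons, zpow_add₀ hq, ih]

lemma det_jacobiTrudi_zpow_mul (hq : q ≠ 0) (f : ℤ → K) (μ : ℕ → ℤ) (N : ℕ) :
    (jacobiTrudi (fun m => q ^ m * f m) μ N).det =
      q ^ (∑ i ∈ range N, μ i) * (jacobiTrudi f μ N).det := by
  have h_factor : jacobiTrudi (fun m => q ^ m * f m) μ N =
      .of fun i j => q ^ (μ i - i) *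
        Matrix.of (fun i j : Fin N => q ^ (j : ℤ) * jacobiTrudi f μ N i j) i j := by
    ext i j
    simp only [jacobiTrudi, Matrix.of_apply, zpow_add₀ hq, mul_assoc]
  rw [h_factor, Matrix.det_mul_column, Matrix.det_mul_row, ← mul_assoc, ← zpow_sum₀ hq,
    ← zpow_sum₀ hq, ← zpow_add₀ hq, ← sum_add_distrib, Finset.sum_range]
  simp only [sub_add_cancel]

lemma one_sub_zpow_mul_det_flaggedJacobiTrudi (hq : q ≠ 0) {f : ℤ → K}
    (hf : ∀ m, f m = q ^ m * f m + f (m - 1)) (μ : ℕ → ℤ) {N k : ℕ} (hk : k ≤ N) :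
    let flagged := flaggedJacobiTrudi (fun m => q ^ m * f m) f
    let removed (r : ℕ) : K := (flagged (Function.update μ r (μ r - 1)) N r).det
    (1 - q ^ (∑ i ∈ range N, μ i)) * (flagged μ N k).det =
      q ^ (∑ i ∈ range N, μ i) * ∑ r ∈ range k, removed r + ∑ r ∈ Ico k N, removed r := by
  intro flagged removed
  have h_expand : ∀ l ≤ N, (flagged μ N l).det =
      q ^ (∑ i ∈ range N, μ i) * (jacobiTrudi f μ N).det + ∑ r ∈ Ico l N, removed r :=
    fun l hl => by
      rw [← det_jacobiTrudi_zpow_mul hq, det_flaggedJacobiTrudi_eq_add_sum hf hl]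
  have h_zero : (jacobiTrudi f μ N).det = q ^ (∑ i ∈ range N, μ i) * (jacobiTrudi f μ N).det +
      (∑ r ∈ range k, removed r + ∑ r ∈ Ico k N, removed r) := by
    rw [range_eq_Ico (a := k), sum_Ico_consecutive _ k.zero_le hk, ← h_expand 0 N.zero_le,
      ← flaggedJacobiTrudi_zero]
  rw [h_expand k hk]
  linear_combination q ^ (∑ i ∈ range N, μ i) * h_zero

/-- The principal specialization `h_m(1, q, q², …) = 1 / (q; q)_m` of the complete homogeneous
symmetric function, which is `0` for `m < 0`. -/
def hsymmSpec (q : K) : ℤ → K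
  | .ofNat m => (qPochhammer q m)⁻¹
  | .negSucc _ => 0

@[simp]
lemma hsymmSpec_natCast (q : K) (m : ℕ) : hsymmSpec q m = (qPochhammer q m)⁻¹ := rfl

lemma hsymmSpec_of_neg (q : K) : ∀ m < 0, hsymmSpec q m = 0
  | .negSucc _, _ => rfl

@[simp]
lemma hsymmSpec_zero (q : K) : hsymmSpec q 0 = 1 := by
  simpa [qPochhammer] using hsymmSpec_natCast q 0

lemma hsymmSpec_sub_one (hq : ¬IsOfFinOrder q) (m : ℤ) :
    hsymmSpec q (m - 1) = (1 - q ^ m) * hsymmSpec q m := by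
  obtain hm | rfl | hm := lt_trichotomy m 0
  · rw [hsymmSpec_of_neg q _ hm, hsymmSpec_of_neg q _ (by omega), mul_zero]
  · simp [hsymmSpec_of_neg]
  · obtain ⟨n, rfl⟩ : ∃ n : ℕ, m = (n + 1 : ℕ) := ⟨(m - 1).toNat, by omega⟩
    have := one_sub_pow_ne_zero hq n.succ_pos
    have := qPochhammer_ne_zero hq n
    rw [Nat.cast_succ, add_sub_cancel_right, ← Nat.cast_succ, hsymmSpec_natCast,
      hsymmSpec_natCast, zpow_natCast, qPochhammer_succ]
    field_simp

lemma hsymmSpec_eq_zpow_mul_add (hq : ¬IsOfFinOrder q) (m : ℤ) :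
    hsymmSpec q m = q ^ m * hsymmSpec q m + hsymmSpec q (m - 1) := by
  rw [hsymmSpec_sub_one hq]
  ring

lemma antitone_update_sub_one {μ : ℕ → ℕ} (hμ : Antitone μ) {r : ℕ} (hr : μ (r + 1) < μ r) :
    Antitone (Function.update μ r (μ r - 1)) := by
  refine antitone_nat_of_succ_le fun i => ?_
  have := hμ (Nat.le_add_right i 1)
  simp only [Function.update_apply]
  split_ifs <;> subst_vars <;> omega

lemma update_natCast_sub_one {μ : ℕ → ℕ} {r : ℕ} (hr : 0 < μ r) :
    Function.update (fun i => (μ i : ℤ)) r (μ r - 1) =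
      fun i => (Function.update μ r (μ r - 1) i : ℤ) := by
  ext i
  obtain rfl | hi := eq_or_ne i r
  · simp only [Function.update_self]
    omega
  · simp only [Function.update_of_ne hi]

lemma sum_update_sub_one_add_one {ι : Type*} [DecidableEq ι] {s : Finset ι} {μ : ι → ℕ} {r : ι}
    (hr : r ∈ s) (hμ : 0 < μ r) : ∑ i ∈ s, Function.update μ r (μ r - 1) i + 1 = ∑ i ∈ s, μ i := by
  rw [sum_update_of_mem hr, ← add_sum_erase s μ hr, sdiff_singleton_eq_erase]
  omega

/-- Membership in `Algebra.adjoin ℕ {q}` encodes being a polynomial in `q` with nonnegative integer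
coefficients. -/
theorem qPochhammer_mul_det_flaggedJacobiTrudi_mem_adjoin (hq₀ : q ≠ 0) (hq : ¬IsOfFinOrder q)
    {μ : ℕ → ℕ} (hμ : Antitone μ) {N k : ℕ} (hN : μ N = 0) (hk : k ≤ N) :
    qPochhammer q (∑ i ∈ range N, μ i) *
        (flaggedJacobiTrudi (fun m => q ^ m * hsymmSpec q m) (hsymmSpec q) (μ ·) N k).det ∈
      Algebra.adjoin ℕ {q} := by
  set d := ∑ i ∈ range N, μ i with hd
  clear_value d
  induction d generalizing μ k with
  | zero =>
    have h_zero : ∀ i < N, μ i = 0 := by simpa [eq_comm] using hd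
    rw [det_flaggedJacobiTrudi_eq_one] <;>
      simp +contextual [qPochhammer, hsymmSpec_of_neg, h_zero]
  | succ d ih =>
    set flagged := flaggedJacobiTrudi (fun m => q ^ m * hsymmSpec q m) (hsymmSpec q)
    set removed : ℕ → K := fun r =>
      (flagged (Function.update (fun i => (μ i : ℤ)) r (μ r - 1)) N r).det with h_removed
    have h_removed_mem : ∀ r < N, qPochhammer q d * removed r ∈ Algebra.adjoin ℕ {q} := by
      intro r hr
      obtain h_corner | h_eq := (hμ r.le_succ).lt_or_eq
      · have h_pos := (Nat.zero_le _).trans_lt h_corner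
        simp only [h_removed, update_natCast_sub_one h_pos]
        refine ih (antitone_update_sub_one hμ h_corner) ?_ hr.le ?_
        · rw [Function.update_of_ne hr.ne', hN]
        · have := sum_update_sub_one_add_one (mem_range.2 hr) h_pos
          omega
      · suffices removed r = 0 by simp [this]
        obtain h_lt | rfl := Nat.lt_or_eq_of_le (Nat.succ_le_of_lt hr)
        · exact det_flaggedJacobiTrudi_update_eq_zero_of_eq h_lt (congrArg Nat.cast h_eq)
        · exact det_flaggedJacobiTrudi_update_eq_zero_of_last (hsymmSpec_of_neg q)
            (by simp [← h_eq, hN])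
    have h_rec : (1 - q ^ (d + 1)) * (flagged (μ ·) N k).det =
        q ^ (d + 1) * ∑ r ∈ range k, removed r + ∑ r ∈ Ico k N, removed r := by
      have := one_sub_zpow_mul_det_flaggedJacobiTrudi hq₀ (hsymmSpec_eq_zpow_mul_add hq) (μ ·) hk
      rwa [← Nat.cast_sum, ← hd, zpow_natCast] at this
    rw [qPochhammer_succ, mul_assoc, h_rec, mul_add, mul_left_comm, mul_sum (range k),
      mul_sum (Ico k N)]
    refine add_mem (mul_mem (pow_mem (Algebra.self_mem_adjoin_singleton ℕ q) _) ?_) ?_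
    · exact sum_mem fun r hr => h_removed_mem r ((mem_range.1 hr).trans_le hk)
    · exact sum_mem fun r hr => h_removed_mem r (mem_Ico.1 hr).2

lemma exists_eval₂_eq_qPochhammer_mul_det_jacobiTrudi (hq₀ : q ≠ 0) (hq : ¬IsOfFinOrder q)
    {μ : ℕ → ℕ} (hμ : Antitone μ) {N : ℕ} (hN : μ N = 0) :
    ∃ P : ℕ[X], P.eval₂ (Nat.castRingHom K) q =
      qPochhammer q (∑ i ∈ range N, μ i) * (jacobiTrudi (hsymmSpec q) (μ ·) N).det := by
  have h_mem := qPochhammer_mul_det_flaggedJacobiTrudi_mem_adjoin hq₀ hq hμ hN N.zero_le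
  rwa [flaggedJacobiTrudi_zero, Algebra.adjoin_singleton_eq_range_aeval] at h_mem

lemma hsymmSpec_natCast_sub (hq₀ : q ≠ 0) (hq : ¬IsOfFinOrder q) (l m : ℕ) :
    hsymmSpec q (l - m) = (qPochhammer q l)⁻¹ * ((∏ t ∈ range m, -(q ^ t)⁻¹) *
      (∏ t ∈ range m, (X - C (q ^ t))).eval (q ^ l)) := by
  induction m with
  | zero => simp
  | succ m ih =>
    have h_factor : 1 - q ^ ((l : ℤ) - m) = -(q ^ m)⁻¹ * (q ^ l - q ^ m) := by
      rw [zpow_sub₀ hq₀, zpow_natCast, zpow_natCast]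
      field_simp
      ring
    rw [Nat.cast_succ, ← sub_sub, hsymmSpec_sub_one hq, h_factor, ih, prod_range_succ,
      prod_range_succ, eval_mul, eval_sub, eval_X, eval_C]
    ring

lemma det_hsymmSpec_natCast_sub (hq₀ : q ≠ 0) (hq : ¬IsOfFinOrder q) {N : ℕ} (l : Fin N → ℕ) :
    (Matrix.of fun i j : Fin N => hsymmSpec q (l i - (j : ℕ))).det =
      ∏ j, ((qPochhammer q (l j))⁻¹ * ∏ i ∈ Iio j, (q ^ (i : ℕ))⁻¹ * (q ^ l i - q ^ l j)) := by
  let p (j : Fin N) : K[X] := ∏ t ∈ range j, (X - C (q ^ t))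
  have h_factor : (Matrix.of fun i j : Fin N => hsymmSpec q (l i - (j : ℕ))) =
      .of fun i j => (qPochhammer q (l i))⁻¹ * Matrix.of (fun i j : Fin N =>
        (∏ t ∈ range j, -(q ^ t)⁻¹) * Matrix.of (fun i j => (p j).eval (q ^ l i)) i j) i j := by
    ext i j
    exact hsymmSpec_natCast_sub hq₀ hq _ _
  have h_vandermonde : (Matrix.of fun i j => (p j).eval (q ^ l i)).det =
      ∏ j, ∏ i ∈ Iio j, (q ^ l j - q ^ l i) := by
    rw [← Matrix.det_eval_matrixOfPolynomials_eq_det_vandermonde, Matrix.det_vandermonde]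
    · exact prod_comm' (by simp)
    · intro j
      rw [natDegree_prod_of_monic _ _ fun t _ => monic_X_sub_C _]
      simp only [natDegree_X_sub_C, sum_const, card_range, smul_eq_mul, mul_one]
    · exact fun j => monic_prod_of_monic _ _ fun t _ => monic_X_sub_C _
  have h_range (j : Fin N) : ∏ t ∈ range j, -(q ^ t)⁻¹ = ∏ i ∈ Iio j, -(q ^ (i : ℕ))⁻¹ := by
    rw [← Nat.Iio_eq_range, ← Fin.map_valEmbedding_Iio, prod_map]
    rfl
  rw [h_factor, Matrix.det_mul_column, Matrix.det_mul_row, h_vandermonde, ← prod_mul_distrib,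
    ← prod_mul_distrib]
  refine prod_congr rfl fun j _ => ?_
  rw [h_range, ← prod_mul_distrib]
  congr 1
  exact prod_congr rfl fun i _ => by ring

/-- The beta number `μ i + (N - 1 - i)` of row `i < N`, that is, the `i`-th entry of `μ + δ`. It is
the hook length of the first cell of row `i` when `N` is the number of nonempty rows. -/
def betaNumber (μ : ℕ → ℕ) (N i : ℕ) : ℕ := μ i + (N - 1 - i)

lemma inv_pow_mul_pow_betaNumber_sub_pow (hq₀ : q ≠ 0) {μ : ℕ → ℕ} (hμ : Antitone μ)
    {N i j : ℕ} (hij : i < j) (hj : j < N) :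
    (q ^ (N - (j + 1)))⁻¹ * (q ^ betaNumber μ N j - q ^ betaNumber μ N i) =
      q ^ μ j * (1 - q ^ (betaNumber μ N i - betaNumber μ N j)) := by
  have h_anti := hμ hij.le
  have h_pow_j : q ^ betaNumber μ N j = q ^ (N - (j + 1)) * q ^ μ j := by
    rw [betaNumber, ← pow_add]
    congr 1
    omega
  have h_pow_i : q ^ betaNumber μ N i =
      q ^ betaNumber μ N j * q ^ (betaNumber μ N i - betaNumber μ N j) := by
    rw [← pow_add]
    simp only [betaNumber]
    congr 1
    omega
  have := pow_ne_zero (N - (j + 1)) hq₀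
  rw [h_pow_i, h_pow_j]
  field_simp

lemma det_jacobiTrudi_hsymmSpec (hq₀ : q ≠ 0) (hq : ¬IsOfFinOrder q) {μ : ℕ → ℕ}
    (hμ : Antitone μ) (N : ℕ) :
    (jacobiTrudi (hsymmSpec q) (μ ·) N).det =
      ∏ i ∈ range N, ((qPochhammer q (betaNumber μ N i))⁻¹ *
        ∏ j ∈ Ioo i N, q ^ μ j * (1 - q ^ (betaNumber μ N i - betaNumber μ N j))) := by
  have h_reverse : (jacobiTrudi (hsymmSpec q) (μ ·) N).submatrix Fin.revPerm Fin.revPerm =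
      .of fun i j : Fin N => hsymmSpec q (betaNumber μ N i.rev - (j : ℕ)) := by
    ext i j
    simp only [jacobiTrudi, betaNumber, Matrix.submatrix_apply, Matrix.of_apply, Fin.revPerm_apply,
      Fin.val_rev]
    congr 1
    omega
  rw [← Matrix.det_submatrix_equiv_self Fin.revPerm, h_reverse, det_hsymmSpec_natCast_sub hq₀ hq,
    ← Equiv.prod_comp Fin.revPerm, Finset.prod_range]
  refine prod_congr rfl fun i _ => ?_
  rw [Fin.revPerm_apply, Fin.rev_rev, ← Fin.map_revPerm_Ioi, ← Fin.map_valEmbedding_Ioi, prod_map,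
    prod_map]
  congr 1
  refine prod_congr rfl fun (j : Fin N) hj => ?_
  simp only [Equiv.coe_toEmbedding, Fin.revPerm_apply, Fin.rev_rev, Fin.valEmbedding_apply,
    Fin.val_rev]
  exact inv_pow_mul_pow_betaNumber_sub_pow hq₀ hμ (mem_Ioi.1 hj : i < j) j.2

end PrincipalSpecialization

section Hooks

variable {μ : ℕ → ℕ} {N i : ℕ}

lemma lt_colLen_iff (hμ : Antitone μ) (hi : i < N) (c : ℕ) : i < colLen μ N c ↔ c < μ i := by
  constructor
  · contrapose!
    intro hc
    rw [← card_range i, colLen]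
    refine card_le_card fun r hr => ?_
    rw [mem_filter] at hr
    exact mem_range.2 (lt_of_not_ge fun h => (hc.trans_lt hr.2).not_ge (hμ h))
  · intro hc
    rw [← Nat.succ_le_iff, ← card_range i.succ, colLen]
    refine card_le_card fun r hr => ?_
    have hr := Nat.lt_succ_iff.1 (mem_range.1 hr)
    exact mem_filter.2 ⟨mem_range.2 (hr.trans_lt hi), hc.trans_le (hμ hr)⟩

lemma colLen_le (μ : ℕ → ℕ) (N c : ℕ) : colLen μ N c ≤ N :=
  (card_filter_le _ _).trans_eq (card_range N)

lemma antitone_colLen (μ : ℕ → ℕ) (N : ℕ) : Antitone (colLen μ N) :=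
  fun _ _ h => card_le_card (monotone_filter_right _ fun _ _ => h.trans_lt)

lemma hookLen_pos {c : ℕ} (hμ : Antitone μ) (hi : i < N) (hc : c < μ i) : 0 < hookLen μ N i c := by
  have := (lt_colLen_iff hμ hi c).2 hc
  rw [hookLen]
  omega

lemma injOn_hookLen (hμ : Antitone μ) (hi : i < N) : Set.InjOn (hookLen μ N i) (range (μ i)) := by
  refine StrictAntiOn.injOn fun b hb c hc hbc => ?_
  have := (lt_colLen_iff hμ hi b).2 (mem_range.1 hb)
  have := (lt_colLen_iff hμ hi c).2 (mem_range.1 hc)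
  have := antitone_colLen μ N hbc.le
  simp only [hookLen, coe_range, Set.mem_Iio] at *
  omega

lemma injOn_betaNumber_sub (hμ : Antitone μ) :
    Set.InjOn (fun j => betaNumber μ N i - betaNumber μ N j) (Ioo i N) := by
  refine StrictMonoOn.injOn fun j hj k hk hjk => ?_
  have := hμ (mem_Ioo.1 hj).1.le
  have := hμ hjk.le
  simp only [betaNumber, coe_Ioo, Set.mem_Ioo] at *
  omega

/-- The hook of `(i, c)` is longer than `β i - β j` if column `c` reaches row `j`, and shorter if it
does not. -/
lemma hookLen_ne_betaNumber_sub {j c : ℕ} (hμ : Antitone μ) (hij : i < j) (hj : j < N)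
    (hc : c < μ i) : hookLen μ N i c ≠ betaNumber μ N i - betaNumber μ N j := by
  have := (lt_colLen_iff hμ (hij.trans hj) c).2 hc
  have := lt_colLen_iff hμ hj c
  have := hμ hij.le
  simp only [hookLen, betaNumber]
  omega

lemma disjoint_image_hookLen_image_betaNumber_sub (hμ : Antitone μ) :
    Disjoint ((range (μ i)).image (hookLen μ N i))
      ((Ioo i N).image fun j => betaNumber μ N i - betaNumber μ N j) := by
  simp only [Finset.disjoint_left, mem_image, mem_range, mem_Ioo]
  rintro _ ⟨c, hc, rfl⟩ ⟨j, hj, h⟩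
  exact hookLen_ne_betaNumber_sub hμ hj.1 hj.2 hc h.symm

lemma image_hookLen_union_image_betaNumber_sub (hμ : Antitone μ) (hi : i < N) :
    (range (μ i)).image (hookLen μ N i) ∪
        (Ioo i N).image (fun j => betaNumber μ N i - betaNumber μ N j) =
      Icc 1 (betaNumber μ N i) := by
  refine eq_of_subset_of_card_le (union_subset ?_ ?_) ?_
  · refine image_subset_iff.2 fun c hc => mem_Icc.2 ⟨hookLen_pos hμ hi (mem_range.1 hc), ?_⟩
    have := colLen_le μ N c
    simp only [hookLen, betaNumber]
    omega
  · refine image_subset_iff.2 fun j hj => ?_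
    have := hμ (mem_Ioo.1 hj).1.le
    simp only [mem_Ioo, mem_Icc, betaNumber] at *
    omega
  · rw [card_union_of_disjoint (disjoint_image_hookLen_image_betaNumber_sub hμ),
      card_image_of_injOn (injOn_hookLen hμ hi), card_image_of_injOn (injOn_betaNumber_sub hμ),
      Nat.card_Icc, card_range, Nat.card_Ioo, betaNumber]
    omega

lemma prod_hookLen_mul_prod_betaNumber_sub {M : Type*} [CommMonoid M] (f : ℕ → M)
    (hμ : Antitone μ) (hi : i < N) :
    (∏ c ∈ range (μ i), f (hookLen μ N i c)) *
        ∏ j ∈ Ioo i N, f (betaNumber μ N i - betaNumber μ N j) =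
      ∏ m ∈ Icc 1 (betaNumber μ N i), f m := by
  rw [← image_hookLen_union_image_betaNumber_sub hμ hi,
    prod_union (disjoint_image_hookLen_image_betaNumber_sub hμ),
    prod_image (injOn_hookLen hμ hi), prod_image (injOn_betaNumber_sub hμ)]

theorem det_jacobiTrudi_hsymmSpec_mul_prod_hookLen {K : Type*} [Field K] {q : K} (hq₀ : q ≠ 0)
    (hq : ¬IsOfFinOrder q) (hμ : Antitone μ) (N : ℕ) :
    (jacobiTrudi (hsymmSpec q) (μ ·) N).det *
        ∏ i ∈ range N, ∏ c ∈ range (μ i), (1 - q ^ hookLen μ N i c) =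
      q ^ (∑ j ∈ range N, j * μ j) := by
  have h_row : ∀ i ∈ range N, (qPochhammer q (betaNumber μ N i))⁻¹ *
        (∏ j ∈ Ioo i N, q ^ μ j * (1 - q ^ (betaNumber μ N i - betaNumber μ N j))) *
        ∏ c ∈ range (μ i), (1 - q ^ hookLen μ N i c) = q ^ (∑ j ∈ Ioo i N, μ j) := by
    intro i hi
    have h_hooks : (∏ c ∈ range (μ i), (1 - q ^ hookLen μ N i c)) *
        ∏ j ∈ Ioo i N, (1 - q ^ (betaNumber μ N i - betaNumber μ N j)) =
          qPochhammer q (betaNumber μ N i) :=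
      prod_hookLen_mul_prod_betaNumber_sub (1 - q ^ ·) hμ (mem_range.1 hi)
    have h_ne := qPochhammer_ne_zero hq (betaNumber μ N i)
    rw [prod_mul_distrib, prod_pow_eq_pow_sum, mul_assoc, inv_mul_eq_iff_eq_mul₀ h_ne, ← h_hooks]
    ring
  have h_exponent : ∑ i ∈ range N, ∑ j ∈ Ioo i N, μ j = ∑ j ∈ range N, j * μ j := by
    rw [sum_comm' (t' := range N) (s' := range)]
    · simp
    · intro i j
      simp only [mem_range, mem_Ioo]
      omega
  rw [det_jacobiTrudi_hsymmSpec hq₀ hq hμ, ← prod_mul_distrib, prod_congr rfl h_row,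
    prod_pow_eq_pow_sum, h_exponent]

end Hooks

section Descent

lemma exists_eq_map_mul_of_map_mul_eq_X_pow_mul {S R : Type*} [Semiring S] [CommRing R] [IsDomain R]
    {φ : S →+* R} (hφ : Function.Injective φ) {P : S[X]} {F H : R[X]} {n : ℕ}
    (hH : H.coeff 0 ≠ 0) (h : P.map φ * H = X ^ n * F) : ∃ Q : S[X], F = Q.map φ * H := by
  have h_dvd_map : X ^ n ∣ P.map φ :=
    prime_X.pow_dvd_of_dvd_mul_right n (mt X_dvd_iff.1 hH) ⟨F, h⟩
  obtain ⟨Q, rfl⟩ : X ^ n ∣ P := by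
    simp only [X_pow_dvd_iff, coeff_map, map_eq_zero_iff φ hφ] at h_dvd_map ⊢
    exact h_dvd_map
  rw [Polynomial.map_mul, Polynomial.map_pow, map_X, mul_assoc] at h
  exact ⟨Q, (mul_left_cancel₀ (pow_ne_zero n X_ne_zero) h).symm⟩

lemma not_isOfFinOrder_X {R : Type*} [Semiring R] [Nontrivial R] : ¬IsOfFinOrder (X : R[X]) := by
  rw [isOfFinOrder_iff_pow_eq_one]
  rintro ⟨n, hn, h⟩
  simpa [hn.ne'] using congrArg natDegree h

lemma coeff_zero_prod_one_sub_X_pow_hookLen (R : Type*) [CommRing R] {μ : ℕ → ℕ}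
    (hμ : Antitone μ) (N : ℕ) :
    (∏ i ∈ range N, ∏ c ∈ range (μ i), (1 - X ^ hookLen μ N i c : R[X])).coeff 0 = 1 := by
  simp only [coeff_zero_eq_eval_zero, eval_prod, eval_sub, eval_one, eval_pow, eval_X]
  refine prod_eq_one fun i hi => prod_eq_one fun c hc => ?_
  rw [zero_pow (hookLen_pos hμ (mem_range.1 hi) (mem_range.1 hc)).ne', sub_zero]

theorem exists_qPochhammer_eq_map_mul_prod_hookLen {μ : ℕ → ℕ} (hμ : Antitone μ) {N : ℕ}
    (hN : μ N = 0) :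
    ∃ P : ℕ[X], qPochhammer (X : ℤ[X]) (∑ i ∈ range N, μ i) =
      P.map Int.ofNatHom * ∏ i ∈ range N, ∏ c ∈ range (μ i), (1 - X ^ hookLen μ N i c) := by
  set φ := algebraMap ℤ[X] (FractionRing ℤ[X])
  have hφ : Function.Injective φ := IsFractionRing.injective _ _
  have hq₀ : φ X ≠ 0 := (map_ne_zero_iff φ hφ).2 X_ne_zero
  have hq : ¬IsOfFinOrder (φ X) :=
    fun h => not_isOfFinOrder_X ((hφ.isOfFinOrder_iff (f := φ.toMonoidHom)).1 h)
  obtain ⟨P, hP⟩ := exists_eval₂_eq_qPochhammer_mul_det_jacobiTrudi hq₀ hq hμ hN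
  have hPφ : φ (P.map Int.ofNatHom) = P.eval₂ (Nat.castRingHom _) (φ X) := by
    rw [Polynomial.map, hom_eval₂, RingHom.eq_natCast' (φ.comp _)]
  refine exists_eq_map_mul_of_map_mul_eq_X_pow_mul (n := ∑ i ∈ range N, i * μ i) (P := P)
    Nat.cast_injective ?_ (hφ ?_)
  · rw [coeff_zero_prod_one_sub_X_pow_hookLen ℤ hμ]
    exact one_ne_zero
  · have h_hook := det_jacobiTrudi_hsymmSpec_mul_prod_hookLen hq₀ hq hμ N
    simp only [map_mul, map_prod, map_sub, map_one, map_pow, map_qPochhammer, hPφ, hP]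
    rw [mul_assoc, h_hook, mul_comm]

end Descent

section Partition

lemma antitone_getD_bot {α : Type*} [Preorder α] [OrderBot α] {l : List α}
    (hl : l.Pairwise (· ≥ ·)) : Antitone (l.getD · ⊥) := by
  refine antitone_nat_of_succ_le fun i => ?_
  obtain hi | hi := lt_or_ge (i + 1) l.length
  · rw [List.getD_eq_getElem _ _ hi, List.getD_eq_getElem _ _ (i.lt_succ_self.trans hi)]
    exact List.pairwise_iff_getElem.1 hl _ _ _ _ i.lt_succ_self
  · rw [List.getD_eq_default _ _ hi]
    exact bot_le

lemma sum_range_getD_zero {M : Type*} [AddCommMonoid M] (l : List M) {n : ℕ} (h : l.length ≤ n) :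
    ∑ i ∈ range n, l.getD i 0 = l.sum := by
  induction l generalizing n with
  | nil => simp
  | cons a l ih =>
    cases n with
    | zero => simp at h
    | succ n =>
      simp only [sum_range_succ', List.getD_cons_zero, List.getD_cons_succ, List.sum_cons,
        ih (Nat.le_of_succ_le_succ h), add_comm]

variable {d : ℕ} (lam : d.Partition)

lemma antitone_partsOf : Antitone (partsOf lam) :=
  antitone_getD_bot (Multiset.pairwise_sort _ _)

lemma length_sort_parts_le : (lam.parts.sort (· ≥ ·)).length ≤ d := by
  conv_rhs => rw [← lam.parts_sum, ← Multiset.sort_eq lam.parts (· ≥ ·), Multiset.sum_coe]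
  exact List.length_le_sum_of_one_le _ fun i hi => lam.parts_pos ((Multiset.mem_sort _).1 hi)

lemma partsOf_self : partsOf lam d = 0 :=
  List.getD_eq_default _ _ (length_sort_parts_le lam)

lemma sum_partsOf : ∑ i ∈ range d, partsOf lam i = d := by
  simp only [partsOf]
  rw [sum_range_getD_zero _ (length_sort_parts_le lam), ← Multiset.sum_coe, Multiset.sort_eq,
    lam.parts_sum]

end Partition

end HookLength

/-- The q-analogue of the hook length formula: for a partition `λ` of `d`, the product
`Π_{i=1}^d (1 - q^i)` is divisible by `Π_{x ∈ λ} (1 - q^{h(x)})` in `ℤ[q]`, with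
quotient a polynomial with nonnegative integer coefficients; that is, the q-dimension
`dim_q(π_λ) = Π_{i=1}^d (1-q^i) / Π_{x∈λ} (1-q^{h(x)})` is a polynomial in `q` with
nonnegative coefficients. -/
theorem stmt18 (d : ℕ) (lam : d.Partition) :
    ∃ P : Polynomial ℕ,
      (∏ i ∈ Finset.Icc 1 d, (1 - Polynomial.X ^ i : Polynomial ℤ))
        = Polynomial.map (Int.ofNatHom : ℕ →+* ℤ) P *
          ∏ r ∈ Finset.range d, ∏ c ∈ Finset.range (partsOf lam r),
            (1 - Polynomial.X ^ (hookLen (partsOf lam) d r c)) := by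
  simpa only [HookLength.sum_partsOf, HookLength.qPochhammer] using
    HookLength.exists_qPochhammer_eq_map_mul_prod_hookLen (HookLength.antitone_partsOf lam)
      (HookLength.partsOf_self lam)
end
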